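/- Let A < B be real numbers, let α : [A,B] → ℝ be Hölder continuous with values in (−1/2, 1/2), and let φ : [A,B] → ℝ be Hölder continuous. Assume the function r ↦ cos(πα(r)) e^{π H[α](r)} φ(r) is Hölder continuous on [A,B]. Define ψ(s) = cos²(πα(s)) φ(s) − sin(πα(s)) e^{−π H[α](s)} H[ cos(πα(·)) e^{π H[α](·)} φ(·) ](s) for s ∈ (A,B). Then for every s ∈ (A,B) the principal value integral H[ψ](s) exists and ψ(s) + tan(πα(s)) H[ψ](s) = φ(s). -/

import Mathlib

open Filter Topology intervalIntegral

/-- The truncated approximants of the principal value integral `∫_A^B f(r)/(r−s) dr`. -/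
noncomputable def pvApprox (A B : ℝ) (f : ℝ → ℝ) (s ε : ℝ) : ℝ :=
  (∫ r in A..(s - ε), f r / (r - s)) + ∫ r in (s + ε)..B, f r / (r - s)

/-- The principal value integral `PV ∫_A^B f(r)/(r−s) dr` (junk value if the limit
does not exist). -/
noncomputable def pv (A B : ℝ) (f : ℝ → ℝ) (s : ℝ) : ℝ :=
  limUnder (𝓝[>] (0 : ℝ)) (pvApprox A B f s)

/-- The finite Hilbert transform `H[f](s) = (1/π) PV ∫_A^B f(r)/(r−s) dr`. -/
noncomputable def Hfin (A B : ℝ) (f : ℝ → ℝ) (s : ℝ) : ℝ :=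
  (1 / Real.pi) * pv A B f s

section Helpers
open MeasureTheory

lemma abs_rpow_intervalIntegrable {p : ℝ} (hp : -1 < p) (a b : ℝ) :
    IntervalIntegrable (fun x : ℝ => |x| ^ p) volume a b := by
  have h0 : ∀ c : ℝ, 0 ≤ c → IntervalIntegrable (fun x : ℝ => |x| ^ p) volume 0 c := by
    intro c hc
    refine (intervalIntegral.intervalIntegrable_rpow' (a := 0) (b := c) hp).congr ?_
    intro x hx
    rw [Set.uIoc_of_le hc] at hx
    simp [abs_of_pos hx.1]
  have h1 : ∀ c : ℝ, IntervalIntegrable (fun x : ℝ => |x| ^ p) volume 0 c := by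
    intro c
    rcases le_total 0 c with hc | hc
    · exact h0 c hc
    · rw [IntervalIntegrable.iff_comp_neg]
      simpa using h0 (-c) (by linarith)
  exact (h1 a).symm.trans (h1 b)

lemma abs_sub_rpow_intervalIntegrable {p : ℝ} (hp : -1 < p) (c a b : ℝ) :
    IntervalIntegrable (fun x : ℝ => |x - c| ^ p) volume a b := by
  have := (abs_rpow_intervalIntegrable hp (a - c) (b - c)).comp_sub_right c
  simpa using this

lemma abs_sub_rpow_integral_bound {p : ℝ} (hp : -1 < p) (hp0 : p ≤ 0) {A B : ℝ} (hAB : A ≤ B) :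
    ∃ K : ℝ, 0 ≤ K ∧ ∀ x : ℝ, ∫ r in A..B, |r - x| ^ p ≤ K := by
  set g : ℝ → ℝ := Set.indicator (Set.Icc (-1) 1) (fun t => |t| ^ p) with hg
  have hgi : Integrable g := by
    rw [hg, integrable_indicator_iff measurableSet_Icc, ← intervalIntegrable_iff_integrableOn_Icc_of_le (by norm_num)]
    exact abs_rpow_intervalIntegrable hp _ _
  have hg0 : ∀ t, 0 ≤ g t := fun t => Set.indicator_nonneg (fun t _ => by positivity) t
  refine ⟨(B - A) + ∫ t, g t, by
    have : 0 ≤ ∫ t, g t := MeasureTheory.integral_nonneg hg0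
    linarith, fun x => ?_⟩
  have hgx : Integrable (fun r => g (r - x)) := hgi.comp_sub_right x
  have h1 : ∫ r in A..B, |r - x| ^ p ≤ ∫ r in A..B, (1 + g (r - x)) := by
    apply intervalIntegral.integral_mono_on hAB (abs_sub_rpow_intervalIntegrable hp x A B)
    · exact (intervalIntegrable_const).add hgx.intervalIntegrable
    · intro r hr
      by_cases h : r - x ∈ Set.Icc (-1 : ℝ) 1
      · simp [hg, Set.indicator_of_mem h]
      · have h1 : 1 ≤ |r - x| := by
          by_contra hc
          push Not at hc
          exact h ⟨by linarith [(abs_lt.1 hc).1], by linarith [(abs_lt.1 hc).2]⟩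
        have := Real.rpow_le_one_of_one_le_of_nonpos h1 hp0
        linarith [hg0 (r - x)]
  refine h1.trans ?_
  rw [intervalIntegral.integral_add intervalIntegrable_const hgx.intervalIntegrable]
  simp only [intervalIntegral.integral_const, smul_eq_mul, mul_one]
  have h2 : ∫ r in A..B, g (r - x) ≤ ∫ r, g (r - x) := by
    rw [intervalIntegral.integral_of_le hAB]
    exact setIntegral_le_integral hgx (Eventually.of_forall fun r => hg0 _)
  rw [integral_sub_right_eq_self] at h2
  linarith

/-- Regular part of the Cauchy transform. -/
noncomputable def cauReg (A B : ℝ) (f : ℝ → ℝ) (z : ℂ) : ℂ :=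
  ∫ r in A..B, ((f r - f z.re : ℝ) : ℂ) / ((r : ℂ) - z)

/-- The logarithmic part. -/
noncomputable def cauLog (A B : ℝ) (z : ℂ) : ℂ :=
  Complex.log (Complex.I * (B - z)) - Complex.log (Complex.I * (A - z))

/-- The extension of the Cauchy transform to the closed half plane. -/
noncomputable def cauExt (A B : ℝ) (f : ℝ → ℝ) (z : ℂ) : ℂ :=
  cauReg A B f z + f z.re * cauLog A B z

/-- The Cauchy transform. -/
noncomputable def cau (A B : ℝ) (f : ℝ → ℝ) (z : ℂ) : ℂ :=
  ∫ r in A..B, (f r : ℂ) / ((r : ℂ) - z)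

lemma holder_cont {f : ℝ → ℝ} {C γ : ℝ} (hγ : 0 < γ)
    (hf : ∀ x y, |f x - f y| ≤ C * |x - y| ^ γ) : Continuous f := by
  rw [continuous_iff_continuousAt]
  intro x
  rw [ContinuousAt, tendsto_iff_norm_sub_tendsto_zero]
  have h : Tendsto (fun y : ℝ => C * |y - x| ^ γ) (𝓝 x) (𝓝 (C * |x - x| ^ γ)) := by
    have : Continuous (fun y : ℝ => C * |y - x| ^ γ) := by
      refine continuous_const.mul ((continuous_abs.comp (continuous_id.sub continuous_const)).rpow_const ?_)
      intro _; right; exact hγ.le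
    exact this.tendsto x
  rw [sub_self, abs_zero, Real.zero_rpow hγ.ne', mul_zero] at h
  exact squeeze_zero (fun _ => norm_nonneg _) (fun y => hf y x) h

lemma reg_integrand_bound {f : ℝ → ℝ} {C γ : ℝ} (hC : 0 ≤ C)
    (hf : ∀ x y, |f x - f y| ≤ C * |x - y| ^ γ) (r : ℝ) (z : ℂ) :
    ‖((f r - f z.re : ℝ) : ℂ) / ((r : ℂ) - z)‖ ≤ C * |r - z.re| ^ (γ - 1) := by
  rcases eq_or_ne r z.re with h | h
  · rw [← h]; simp; positivity
  · have h0 : 0 < |r - z.re| := abs_pos.2 (sub_ne_zero.2 h)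
    have h1 : |r - z.re| ≤ ‖(r : ℂ) - z‖ := by
      simpa using Complex.abs_re_le_norm ((r : ℂ) - z)
    rw [norm_div, Complex.norm_real, Real.norm_eq_abs, Real.rpow_sub_one h0.ne', ← mul_div_assoc]
    exact div_le_div₀ (by positivity) (hf _ _) h0 h1

lemma cauReg_bound {A B : ℝ} (hAB : A ≤ B) {f : ℝ → ℝ} {C γ : ℝ} (hC : 0 ≤ C) (hγ : 0 < γ)
    (hγ1 : γ ≤ 1) (hf : ∀ x y, |f x - f y| ≤ C * |x - y| ^ γ) :
    ∃ K : ℝ, 0 ≤ K ∧ ∀ z, ‖cauReg A B f z‖ ≤ K := by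
  obtain ⟨K, hK, hb⟩ := abs_sub_rpow_integral_bound (p := γ - 1) (by linarith) (by linarith) hAB
  refine ⟨C * K, by positivity, fun z => ?_⟩
  calc ‖cauReg A B f z‖ ≤ ∫ r in A..B, C * |r - z.re| ^ (γ - 1) := by
        apply intervalIntegral.norm_integral_le_of_norm_le hAB
        · exact Eventually.of_forall fun r _ => reg_integrand_bound hC hf r z
        · exact (abs_sub_rpow_intervalIntegrable (by linarith) _ _ _).const_mul C
    _ ≤ C * K := by
        rw [intervalIntegral.integral_const_mul]
        exact mul_le_mul_of_nonneg_left (hb _) hC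

lemma cauReg_integrable {A B : ℝ} {f : ℝ → ℝ} {C γ : ℝ} (hC : 0 ≤ C) (hγ : 0 < γ)
    (hf : ∀ x y, |f x - f y| ≤ C * |x - y| ^ γ) (z : ℂ) :
    IntervalIntegrable (fun r : ℝ => ((f r - f z.re : ℝ) : ℂ) / ((r : ℂ) - z)) volume A B := by
  have hfc := holder_cont hγ hf
  refine ((abs_sub_rpow_intervalIntegrable (p := γ - 1) (by linarith) z.re A B).const_mul C).mono_fun' ?_ ?_
  · apply Measurable.aestronglyMeasurable
    have := hfc.measurable
    fun_prop
  · exact Eventually.of_forall fun r => reg_integrand_bound hC hf r z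

lemma cauReg_continuous {A B : ℝ} (hAB : A ≤ B) {f : ℝ → ℝ} {C γ : ℝ} (hC : 0 ≤ C) (hγ : 0 < γ)
    (hf : ∀ x y, |f x - f y| ≤ C * |x - y| ^ γ) : Continuous (cauReg A B f) := by
  have hfc := holder_cont hγ hf
  set G : ℂ → ℝ → ℂ := fun z u => Set.indicator (Set.Ioc A B)
    (fun r : ℝ => ((f r - f z.re : ℝ) : ℂ) / ((r : ℂ) - z)) (u + z.re) with hG
  have hEq : cauReg A B f = fun z => ∫ u, G z u := by
    funext z
    rw [cauReg, intervalIntegral.integral_of_le hAB, ← MeasureTheory.integral_indicator measurableSet_Ioc]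
    exact (integral_add_right_eq_self (μ := volume) (Set.indicator (Set.Ioc A B)
      (fun r : ℝ => ((f r - f z.re : ℝ) : ℂ) / ((r : ℂ) - z))) z.re).symm
  rw [hEq, continuous_iff_continuousAt]
  intro z₀
  set K : ℝ := |A| + |B| + |z₀.re| + 1 with hK
  apply continuousAt_of_dominated
    (bound := Set.indicator (Set.Icc (-K) K) (fun u => C * |u| ^ (γ - 1)))
  · refine Eventually.of_forall fun z => Measurable.aestronglyMeasurable ?_
    have := hfc.measurable
    have h1 : Measurable (Set.indicator (Set.Ioc A B)
      (fun r : ℝ => ((f r - f z.re : ℝ) : ℂ) / ((r : ℂ) - z))) :=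
      Measurable.indicator (by fun_prop) measurableSet_Ioc
    exact h1.comp (measurable_id.add_const _)
  · filter_upwards [Metric.ball_mem_nhds z₀ one_pos] with z hz
    refine Eventually.of_forall fun u => ?_
    by_cases hu : u + z.re ∈ Set.Ioc A B
    · have h1 : |z.re - z₀.re| < 1 := by
        have := Complex.abs_re_le_norm (z - z₀)
        rw [Metric.mem_ball, dist_eq_norm] at hz
        simpa using this.trans_lt hz
      have hu' : u ∈ Set.Icc (-K) K := by
        have := abs_lt.1 h1
        have h2 := le_abs_self z₀.re
        have h3 := neg_abs_le z₀.re
        have h4 := le_abs_self B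
        have h5 := neg_abs_le A
        have h6 := abs_nonneg A
        have h7 := abs_nonneg B
        constructor <;> linarith [hu.1, hu.2, this.1, this.2]
      rw [hG]
      simp only [Set.indicator_of_mem hu, Set.indicator_of_mem hu']
      have := reg_integrand_bound hC hf (u + z.re) z
      simpa using this
    · rw [hG]
      simp only [Set.indicator_of_notMem hu, norm_zero]
      exact Set.indicator_nonneg (fun t _ => by positivity) u
  · rw [integrable_indicator_iff measurableSet_Icc,
      ← intervalIntegrable_iff_integrableOn_Icc_of_le (by
        have h2 := abs_nonneg z₀.re
        have h6 := abs_nonneg A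
        have h7 := abs_nonneg B
        linarith)]
    exact (abs_rpow_intervalIntegrable (by linarith) _ _).const_mul C
  · have hne : ∀ c : ℝ, ∀ᵐ u : ℝ, u ≠ c := fun c => by
      rw [ae_iff]; simp
    filter_upwards [hne 0, hne (A - z₀.re), hne (B - z₀.re)] with u h0 hA hB
    have hcont : ContinuousAt (fun z : ℂ => ((f (u + z.re) - f z.re : ℝ) : ℂ) / (((u + z.re : ℝ) : ℂ) - z)) z₀ := by
      apply ContinuousAt.div
      · fun_prop
      · fun_prop
      · intro h
        have := congrArg Complex.re h
        simp at this
        exact h0 this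
    by_cases hu : u + z₀.re ∈ Set.Ioc A B
    · have hu' : u + z₀.re ∈ Set.Ioo A B := ⟨hu.1, lt_of_le_of_ne hu.2 (fun h => hB (by linarith))⟩
      refine hcont.congr ?_
      have : ∀ᶠ z : ℂ in 𝓝 z₀, u + z.re ∈ Set.Ioo A B :=
        (continuous_const.add Complex.continuous_re).continuousAt.eventually_mem (isOpen_Ioo.mem_nhds hu')
      filter_upwards [this] with z hz
      rw [hG]
      simp only [Set.indicator_of_mem (Set.Ioo_subset_Ioc_self hz)]
    · have hu' : u + z₀.re ∈ (Set.Icc A B)ᶜ := by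
        intro h
        exact hu ⟨lt_of_le_of_ne h.1 (fun h => hA (by linarith)), h.2⟩
      refine (continuousAt_const (y := (0 : ℂ))).congr ?_
      have : ∀ᶠ z : ℂ in 𝓝 z₀, u + z.re ∈ (Set.Icc A B)ᶜ :=
        (continuous_const.add Complex.continuous_re).continuousAt.eventually_mem (isClosed_Icc.isOpen_compl.mem_nhds hu')
      filter_upwards [this] with z hz
      rw [hG]
      simp only [Set.indicator_of_notMem (fun h => hz (Set.Ioc_subset_Icc_self h))]

end Helpers

section Helpers
open MeasureTheory

lemma I_mul_sub_slit {z : ℂ} (hz : 0 < z.im) (r : ℝ) : Complex.I * ((r : ℂ) - z) ∈ Complex.slitPlane := by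
  left; simp [hz]

lemma sub_ne_zero_of_im_pos {z : ℂ} (hz : z.im ≠ 0) (r : ℝ) : (r : ℂ) - z ≠ 0 := by
  intro h
  have := congrArg Complex.im h
  simp at this
  exact hz this

lemma integral_inv_eq_cauLog {A B : ℝ} {z : ℂ} (hz : 0 < z.im) :
    ∫ r in A..B, 1 / ((r : ℂ) - z) = cauLog A B z := by
  rw [cauLog]
  apply intervalIntegral.integral_eq_sub_of_hasDerivAt (f := fun r : ℝ => Complex.log (Complex.I * (r - z)))
  · intro r _
    have h1 : HasDerivAt (fun r : ℝ => Complex.I * ((r : ℂ) - z)) (Complex.I * 1) r :=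
      ((Complex.ofRealCLM.hasDerivAt (x := r)).sub_const z).const_mul Complex.I
    have h2 := h1.clog_real (I_mul_sub_slit hz r)
    rw [mul_one, div_mul_eq_div_div, div_self Complex.I_ne_zero] at h2
    exact h2
  · apply Continuous.intervalIntegrable
    refine continuous_const.div (by fun_prop) (fun r => sub_ne_zero_of_im_pos hz.ne' r)

lemma cauExt_eq_cau {A B : ℝ} {f : ℝ → ℝ} (hf : Continuous f) {z : ℂ} (hz : 0 < z.im) :
    cauExt A B f z = cau A B f z := by
  rw [cauExt, cauReg, cau, ← integral_inv_eq_cauLog hz, ← intervalIntegral.integral_const_mul,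
    ← intervalIntegral.integral_add]
  · congr 1
    funext r
    push_cast
    ring
  · apply Continuous.intervalIntegrable
    refine Continuous.div (by fun_prop) (by fun_prop) (fun r => sub_ne_zero_of_im_pos hz.ne' r)
  · apply Continuous.intervalIntegrable
    exact continuous_const.mul (continuous_const.div (by fun_prop) (fun r => sub_ne_zero_of_im_pos hz.ne' r))

lemma cau_differentiableAt {A B : ℝ} {f : ℝ → ℝ} (hf : Continuous f) {M : ℝ} (hM : ∀ x, |f x| ≤ M)
    {z : ℂ} (hz : 0 < z.im) : DifferentiableAt ℂ (cau A B f) z := by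
  have hs : {w : ℂ | z.im / 2 < w.im} ∈ 𝓝 z :=
    (isOpen_lt continuous_const Complex.continuous_im).mem_nhds (by simp; linarith)
  have hcont : ∀ w : ℂ, 0 < w.im → Continuous (fun r : ℝ => (f r : ℂ) / ((r : ℂ) - w)) := fun w hw =>
    Continuous.div (by fun_prop) (by fun_prop) (fun r => sub_ne_zero_of_im_pos hw.ne' r)
  have hcont' : ∀ w : ℂ, 0 < w.im → Continuous (fun r : ℝ => (f r : ℂ) / ((r : ℂ) - w) ^ 2) := fun w hw =>
    Continuous.div (by fun_prop) (by fun_prop) (fun r => pow_ne_zero _ (sub_ne_zero_of_im_pos hw.ne' r))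
  have := intervalIntegral.hasDerivAt_integral_of_dominated_loc_of_deriv_le (μ := volume) (a := A) (b := B)
    (F := fun (w : ℂ) (r : ℝ) => (f r : ℂ) / ((r : ℂ) - w))
    (F' := fun (w : ℂ) (r : ℝ) => (f r : ℂ) / ((r : ℂ) - w) ^ 2) (x₀ := z)
    (bound := fun _ => M / (z.im / 2) ^ 2) hs ?_ ?_ ?_ ?_ ?_ ?_
  · exact this.2.differentiableAt
  · filter_upwards [hs] with w hw
    exact (hcont w (by have hw' : z.im / 2 < w.im := hw; linarith)).aestronglyMeasurable
  · exact (hcont z hz).intervalIntegrable _ _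
  · exact (hcont' z hz).aestronglyMeasurable
  · refine Eventually.of_forall fun r _ w hw => ?_
    have hw' : z.im / 2 < w.im := hw
    have h1 : z.im / 2 ≤ ‖(r : ℂ) - w‖ := by
      have := Complex.abs_im_le_norm ((r : ℂ) - w)
      simp only [Complex.sub_im, Complex.ofReal_im, zero_sub, abs_neg] at this
      linarith [le_abs_self w.im]
    rw [norm_div, norm_pow, Complex.norm_real, Real.norm_eq_abs]
    have : 0 ≤ M := (abs_nonneg _).trans (hM 0)
    gcongr
    exact hM r
  · exact intervalIntegrable_const
  · refine Eventually.of_forall fun r _ w hw => ?_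
    have hw' : z.im / 2 < w.im := hw
    have hne := sub_ne_zero_of_im_pos (z := w) (by linarith) r
    have h1 : HasDerivAt (fun w : ℂ => (r : ℂ) - w) (-1) w := by
      simpa using (hasDerivAt_id w).const_sub (r : ℂ)
    have h2 := (hasDerivAt_const w (f r : ℂ)).div h1 hne
    rw [show (0 * ((r : ℂ) - w) - (f r : ℂ) * -1) = f r by ring] at h2
    exact h2

lemma cau_tail {A B : ℝ} (hAB : A ≤ B) {f : ℝ → ℝ} {M : ℝ} (hM : ∀ x, |f x| ≤ M)
    {z : ℂ} (hz : 2 * (|A| + |B| + 1) ≤ ‖z‖) : ‖cau A B f z‖ ≤ 2 * M * (B - A) / ‖z‖ := by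
  have hA := abs_nonneg A
  have hB := abs_nonneg B
  have hz0 : 0 < ‖z‖ := by linarith
  have hM0 : 0 ≤ M := (abs_nonneg _).trans (hM 0)
  have := intervalIntegral.norm_integral_le_of_norm_le_const (a := A) (b := B)
    (f := fun r : ℝ => (f r : ℂ) / ((r : ℂ) - z)) (C := M / (‖z‖ / 2)) ?_
  · rw [cau]
    refine this.trans (le_of_eq ?_)
    rw [abs_of_nonneg (by linarith)]
    field_simp
  · intro r hr
    rw [Set.uIoc_of_le hAB] at hr
    have h1 : |r| ≤ |A| + |B| := by
      rw [abs_le]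
      constructor
      · linarith [hr.1, neg_abs_le A]
      · linarith [hr.2, le_abs_self B]
    have h2 : ‖z‖ / 2 ≤ ‖(r : ℂ) - z‖ := by
      have := norm_sub_norm_le z (r : ℂ)
      rw [norm_sub_rev, Complex.norm_real, Real.norm_eq_abs] at this
      linarith
    rw [norm_div, Complex.norm_real, Real.norm_eq_abs]
    gcongr
    exact hM r

lemma cauLog_continuousAt {A B : ℝ} {z : ℂ} (hz : 0 ≤ z.im) (hA : z ≠ A) (hB : z ≠ B) :
    ContinuousAt (cauLog A B) z := by
  have key : ∀ c : ℝ, z ≠ c → Complex.I * ((c : ℂ) - z) ∈ Complex.slitPlane := by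
    intro c hc
    rcases hz.lt_or_eq with h | h
    · exact I_mul_sub_slit h c
    · right
      simp only [Complex.mul_im, Complex.I_re, Complex.I_im, Complex.sub_re, Complex.ofReal_re]
      intro h2
      apply hc
      apply Complex.ext
      · simp at h2 ⊢; linarith
      · simp [← h]
  unfold cauLog
  have h1 : ∀ c : ℝ, ContinuousAt (fun w : ℂ => Complex.I * ((c : ℂ) - w)) z := fun c => by fun_prop
  exact ((h1 B).clog (key B hB)).sub ((h1 A).clog (key A hA))

lemma cauExt_continuousAt {A B : ℝ} (hAB : A ≤ B) {f : ℝ → ℝ} {C γ : ℝ} (hC : 0 ≤ C) (hγ : 0 < γ)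
    (hf : ∀ x y, |f x - f y| ≤ C * |x - y| ^ γ) {z : ℂ} (hz : 0 ≤ z.im) (hA : z ≠ A) (hB : z ≠ B) :
    ContinuousAt (cauExt A B f) z := by
  have hfc := holder_cont hγ hf
  unfold cauExt
  refine (cauReg_continuous hAB hC hγ hf).continuousAt.add (ContinuousAt.mul (by fun_prop) (cauLog_continuousAt hz hA hB))

lemma log_I_mul_pos {t : ℝ} (ht : 0 < t) : Complex.log (Complex.I * t) = Real.log t + Real.pi / 2 * Complex.I := by
  rw [mul_comm, Complex.log_ofReal_mul ht Complex.I_ne_zero, Complex.log_I]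

lemma log_I_mul_neg {t : ℝ} (ht : t < 0) : Complex.log (Complex.I * t) = Real.log (-t) - Real.pi / 2 * Complex.I := by
  have : Complex.I * t = ((-t : ℝ) : ℂ) * (-Complex.I) := by push_cast; ring
  rw [this, Complex.log_ofReal_mul (by linarith) (neg_ne_zero.2 Complex.I_ne_zero), Complex.log_neg_I]
  ring

lemma cauLog_inside {A B s : ℝ} (hA : A < s) (hB : s < B) :
    cauLog A B s = ((Real.log (B - s) - Real.log (s - A) : ℝ) : ℂ) + Real.pi * Complex.I := by
  rw [cauLog, ← Complex.ofReal_sub, ← Complex.ofReal_sub, log_I_mul_pos (by linarith), log_I_mul_neg (by linarith), neg_sub]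
  push_cast; ring

lemma cauLog_outside {A B s : ℝ} (hAB : A ≤ B) (h : s < A ∨ B < s) : (cauLog A B s).im = 0 := by
  rw [cauLog, ← Complex.ofReal_sub, ← Complex.ofReal_sub]
  rcases h with h | h
  · rw [log_I_mul_pos (by linarith), log_I_mul_pos (by linarith)]; simp
  · rw [log_I_mul_neg (by linarith), log_I_mul_neg (by linarith)]; simp

lemma cauReg_real (A B : ℝ) (f : ℝ → ℝ) (s : ℝ) :
    cauReg A B f s = ((∫ r in A..B, (f r - f s) / (r - s) : ℝ) : ℂ) := by
  rw [cauReg, ← intervalIntegral.integral_ofReal]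
  congr 1
  funext r
  push_cast
  simp

lemma cauExt_outside {A B s : ℝ} (hAB : A ≤ B) (f : ℝ → ℝ) (h : s < A ∨ B < s) : (cauExt A B f s).im = 0 := by
  rw [cauExt, cauReg_real]
  simp [cauLog_outside hAB h]

lemma cauExt_inside_im {A B s : ℝ} (hA : A < s) (hB : s < B) (f : ℝ → ℝ) : (cauExt A B f s).im = Real.pi * f s := by
  rw [cauExt, cauReg_real, cauLog_inside hA hB]
  simp [-Complex.ofReal_sub]
  ring

lemma cauExt_pv {A B s : ℝ} (hA : A < s) (hB : s < B) {f : ℝ → ℝ} {C γ : ℝ} (hC : 0 ≤ C) (hγ : 0 < γ)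
    (hf : ∀ x y, |f x - f y| ≤ C * |x - y| ^ γ) :
    Tendsto (pvApprox A B f s) (𝓝[>] 0) (𝓝 (cauExt A B f s).re) := by
  have hfc := holder_cont hγ hf
  have hre : (cauExt A B f s).re = (∫ r in A..B, (f r - f s) / (r - s)) + f s * (Real.log (B - s) - Real.log (s - A)) := by
    rw [cauExt, cauReg_real, cauLog_inside hA hB]
    simp [-Complex.ofReal_sub]
  have hintg : ∀ a b : ℝ, IntervalIntegrable (fun r => (f r - f s) / (r - s)) volume a b := by
    intro a b
    have := (cauReg_integrable (A := a) (B := b) hC hγ hf (s : ℂ)).norm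
    refine this.mono_fun ?_ ?_
    · apply Measurable.aestronglyMeasurable
      have := hfc.measurable
      fun_prop
    · refine Eventually.of_forall fun r => ?_
      simp only [norm_norm, Complex.ofReal_re]
      rw [← Complex.ofReal_sub, ← Complex.ofReal_div, Complex.norm_real]
  set g : ℝ → ℝ := fun r => (f r - f s) / (r - s) with hg
  have hlim : Tendsto (fun ε : ℝ => ((∫ r in A..(s - ε), g r) + ∫ r in (s + ε)..B, g r) +
      f s * (Real.log (B - s) - Real.log (s - A))) (𝓝[>] 0) (𝓝 (cauExt A B f s).re) := by
    rw [hre]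
    apply Tendsto.add_const
    have hcp : Continuous (fun x => ∫ r in A..x, g r) := intervalIntegral.continuous_primitive hintg A
    have h1 : (fun ε : ℝ => ((∫ r in A..(s - ε), g r) + ∫ r in (s + ε)..B, g r)) =
        fun ε : ℝ => (∫ r in A..(s - ε), g r) + ((∫ r in A..B, g r) - ∫ r in A..(s + ε), g r) := by
      funext ε
      rw [intervalIntegral.integral_interval_sub_left (hintg _ _) (hintg _ _)]
    rw [h1]
    have h2 : Continuous (fun ε : ℝ => (∫ r in A..(s - ε), g r) + ((∫ r in A..B, g r) - ∫ r in A..(s + ε), g r)) := by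
      refine Continuous.add (hcp.comp (by fun_prop)) (continuous_const.sub (hcp.comp (by fun_prop)))
    have := (h2.tendsto 0).mono_left (nhdsWithin_le_nhds (s := Set.Ioi (0 : ℝ)))
    simpa using this
  refine hlim.congr' ?_
  have hev : ∀ᶠ ε : ℝ in 𝓝[>] 0, ε ∈ Set.Ioo 0 (min (s - A) (B - s)) :=
    Ioo_mem_nhdsGT (by apply lt_min <;> linarith)
  filter_upwards [hev] with ε hε
  have he0 := hε.1
  have heA : ε < s - A := hε.2.trans_le (min_le_left _ _)
  have heB : ε < B - s := hε.2.trans_le (min_le_right _ _)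
  have hc1 : IntervalIntegrable (fun r => (r - s)⁻¹) volume A (s - ε) := by
    apply ContinuousOn.intervalIntegrable
    apply ContinuousOn.inv₀ (by fun_prop)
    intro r hr
    rw [Set.uIcc_of_le (by linarith)] at hr
    have := hr.2
    intro h; linarith
  have hc2 : IntervalIntegrable (fun r => (r - s)⁻¹) volume (s + ε) B := by
    apply ContinuousOn.intervalIntegrable
    apply ContinuousOn.inv₀ (by fun_prop)
    intro r hr
    rw [Set.uIcc_of_le (by linarith)] at hr
    have := hr.1
    intro h; linarith
  have hsplit : (fun r => f r / (r - s)) = fun r => g r + f s * (r - s)⁻¹ := by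
    funext r
    rw [hg]; ring
  have hl1 : ∫ r in A..(s - ε), (r - s)⁻¹ = Real.log ε - Real.log (s - A) := by
    rw [intervalIntegral.integral_comp_sub_right (fun x => x⁻¹) s, integral_inv_of_neg (by linarith) (by linarith),
      show (s - ε - s) / (A - s) = ε / (s - A) by
        rw [div_eq_div_iff (by linarith) (by linarith)]; ring,
      Real.log_div (by linarith) (by linarith)]
  have hl2 : ∫ r in (s + ε)..B, (r - s)⁻¹ = Real.log (B - s) - Real.log ε := by
    rw [intervalIntegral.integral_comp_sub_right (fun x => x⁻¹) s, integral_inv_of_pos (by linarith) (by linarith),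
      Real.log_div (by linarith) (by linarith)]
    simp
  rw [pvApprox, hsplit, intervalIntegral.integral_add (hintg _ _) (hc1.const_mul _),
    intervalIntegral.integral_add (hintg _ _) (hc2.const_mul _), intervalIntegral.integral_const_mul,
    intervalIntegral.integral_const_mul, hl1, hl2]
  ring
end Helpers

section Helpers
open MeasureTheory

lemma cont_aux {F : ℂ → ℂ} (h1 : DifferentiableOn ℂ F {z | 0 < z.im}) {ζ : ℂ} (hζ : ζ.im < 0) {y : ℝ} (hy : 0 < y) :
    Continuous (fun x : ℝ => F (x + y * Complex.I) / (x + y * Complex.I - ζ)) := by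
  have hF : Continuous (fun x : ℝ => F (x + y * Complex.I)) := by
    refine h1.continuousOn.comp_continuous (by fun_prop) (fun x => ?_)
    simp [hy]
  refine hF.div (by fun_prop) (fun x h => ?_)
  have := congrArg Complex.im h
  simp at this
  linarith

lemma half_plane_vanish {F : ℂ → ℂ} {A B K Kt R0 : ℝ} (hK : 0 ≤ K) (hKt : 0 ≤ Kt)
    (h1 : DifferentiableOn ℂ F {z | 0 < z.im})
    (h2 : ∀ z : ℂ, 0 ≤ z.im → z ≠ A → z ≠ B → ContinuousAt F z)
    (h3 : ∀ z : ℂ, 0 ≤ z.im → z.re ≠ A → z.re ≠ B →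
      ‖F z‖ ≤ K * (1 + |z.re - A| ^ (-(3/4) : ℝ) + |z.re - B| ^ (-(3/4) : ℝ)))
    (h4 : ∀ z : ℂ, 0 < z.im → R0 ≤ ‖z‖ → ‖F z‖ ≤ Kt / ‖z‖) {ζ : ℂ} (hζ : ζ.im < 0) :
    Integrable (fun x : ℝ => F x / ((x : ℂ) - ζ)) ∧ ∫ x : ℝ, F x / ((x : ℂ) - ζ) = 0 := by
  set R : ℝ := max R0 (max (2 * ‖ζ‖) 1) with hR
  have hR0 : R0 ≤ R := le_max_left _ _
  have hRζ : 2 * ‖ζ‖ ≤ R := (le_max_left _ _).trans (le_max_right _ _)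
  have hR1 : 1 ≤ R := (le_max_right _ _).trans (le_max_right _ _)
  -- decay
  have hdec : ∀ (z : ℂ) (t : ℝ), 0 < z.im → R ≤ t → t ≤ ‖z‖ → ‖F z / (z - ζ)‖ ≤ 2 * Kt / t ^ 2 := by
    intro z t hz hRt ht
    have ht0 : 0 < t := by linarith
    have hF := h4 z hz (by linarith)
    have hd : t / 2 ≤ ‖z - ζ‖ := by
      have := norm_sub_norm_le z ζ
      linarith
    rw [norm_div]
    calc ‖F z‖ / ‖z - ζ‖ ≤ (Kt / t) / (t / 2) := by
          apply div_le_div₀ (by positivity) (hF.trans _) (by positivity) hd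
          gcongr
      _ = 2 * Kt / t ^ 2 := by field_simp
  set p : ℝ → ℝ := fun x => K * (1 + |x - A| ^ (-(3/4) : ℝ) + |x - B| ^ (-(3/4) : ℝ)) / (-ζ.im) with hp
  have hp0 : ∀ x, 0 ≤ p x := fun x => by
    have : 0 < -ζ.im := by linarith
    positivity
  set g : ℝ → ℝ := fun x => Set.indicator (Set.Icc (-R) R) p x + 4 * Kt * (1 + x ^ 2)⁻¹ with hg
  have hgi : Integrable g := by
    apply Integrable.add _ (integrable_inv_one_add_sq.const_mul _)
    rw [integrable_indicator_iff measurableSet_Icc, ← intervalIntegrable_iff_integrableOn_Icc_of_le (by linarith)]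
    exact (((intervalIntegrable_const.add (abs_sub_rpow_intervalIntegrable (by norm_num) A _ _)).add
      (abs_sub_rpow_intervalIntegrable (by norm_num) B _ _)).const_mul K).div_const _
  have hbd : ∀ z : ℂ, 0 < z.im → z.re ≠ A → z.re ≠ B → ‖F z / (z - ζ)‖ ≤ g z.re := by
    intro z hz hA hB
    rw [hg]
    by_cases hx : z.re ∈ Set.Icc (-R) R
    · simp only [Set.indicator_of_mem hx]
      have h5 : -ζ.im ≤ ‖z - ζ‖ := by
        have := Complex.abs_im_le_norm (z - ζ)
        rw [Complex.sub_im] at this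
        linarith [le_abs_self (z.im - ζ.im)]
      have h6 : ‖F z / (z - ζ)‖ ≤ p z.re := by
        rw [norm_div]
        exact div_le_div₀ (by positivity) (h3 z hz.le hA hB) (by linarith) h5
      have : 0 ≤ 4 * Kt * (1 + z.re ^ 2)⁻¹ := by positivity
      linarith
    · simp only [Set.indicator_of_notMem hx, zero_add]
      have hRx : R < |z.re| := by
        by_contra h
        push Not at h
        exact hx (abs_le.1 h)
      refine (hdec z |z.re| hz hRx.le (Complex.abs_re_le_norm z)).trans ?_
      rw [sq_abs, ← div_eq_mul_inv]
      have h7 : 1 ≤ z.re ^ 2 := by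
        rw [← sq_abs]; nlinarith
      rw [div_le_div_iff₀ (by linarith) (by linarith)]
      nlinarith
  have hne : ∀ c : ℝ, ∀ᵐ u : ℝ, u ≠ c := fun c => by
    rw [ae_iff]; simp
  set G : ℕ → ℝ → ℂ := fun n => Set.indicator (Set.Ioc (-((n : ℝ) + 1)) ((n : ℝ) + 1))
    (fun x : ℝ => F (x + ((1 / ((n : ℝ) + 1) : ℝ) : ℂ) * Complex.I) / (x + ((1 / ((n : ℝ) + 1) : ℝ) : ℂ) * Complex.I - ζ)) with hG
  have hpos : ∀ n : ℕ, (0 : ℝ) < 1 / ((n : ℝ) + 1) := fun n => by positivity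
  have hGm : ∀ n, AEStronglyMeasurable (G n) volume := fun n =>
    ((cont_aux h1 hζ (hpos n)).measurable.indicator measurableSet_Ioc).aestronglyMeasurable
  have hGb : ∀ n, ∀ᵐ x : ℝ, ‖G n x‖ ≤ g x := by
    intro n
    filter_upwards [hne A, hne B] with x hA hB
    rw [hG]
    simp only
    by_cases hx : x ∈ Set.Ioc (-((n : ℝ) + 1)) ((n : ℝ) + 1)
    · rw [Set.indicator_of_mem hx]
      have := hbd (x + ((1 / ((n : ℝ) + 1) : ℝ) : ℂ) * Complex.I) (by simpa [-one_div, -Complex.ofReal_div] using hpos n)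
        (by simpa [-one_div, -Complex.ofReal_div] using hA) (by simpa [-one_div, -Complex.ofReal_div] using hB)
      simpa [-one_div, -Complex.ofReal_div] using this
    · rw [Set.indicator_of_notMem hx, norm_zero, hg]
      have := Set.indicator_nonneg (s := Set.Icc (-R) R) (fun x _ => hp0 x) x
      positivity
  have hGl : ∀ᵐ x : ℝ, Tendsto (fun n => G n x) atTop (𝓝 (F x / ((x : ℂ) - ζ))) := by
    filter_upwards [hne A, hne B] with x hA hB
    have hc : ContinuousAt (fun z : ℂ => F z / (z - ζ)) (x : ℂ) := by
      refine (h2 x (by simp) (by exact_mod_cast hA) (by exact_mod_cast hB)).div (by fun_prop) ?_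
      intro h
      have := congrArg Complex.im h
      simp at this
      linarith
    have hz : Tendsto (fun n : ℕ => (x : ℂ) + ((1 / ((n : ℝ) + 1) : ℝ) : ℂ) * Complex.I) atTop (𝓝 (x : ℂ)) := by
      have h8 : Tendsto (fun n : ℕ => ((1 / ((n : ℝ) + 1) : ℝ) : ℂ)) atTop (𝓝 ((0 : ℝ) : ℂ)) :=
        (Complex.continuous_ofReal.tendsto 0).comp tendsto_one_div_add_atTop_nhds_zero_nat
      have := (h8.mul_const Complex.I).const_add (x : ℂ)
      simpa using this
    refine (hc.tendsto.comp hz).congr' ?_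
    obtain ⟨N, hN⟩ := exists_nat_gt |x|
    filter_upwards [eventually_ge_atTop N] with n hn
    have hn' : (N : ℝ) ≤ n := by exact_mod_cast hn
    have hab := abs_lt.1 hN
    have hx : x ∈ Set.Ioc (-((n : ℝ) + 1)) ((n : ℝ) + 1) := ⟨by linarith [hab.1], by linarith [hab.2]⟩
    rw [hG]
    simp only [Set.indicator_of_mem hx, Function.comp]
  have hlim := tendsto_integral_of_dominated_convergence g hGm hgi hGb hGl
  have hintg : Integrable (fun x : ℝ => F x / ((x : ℂ) - ζ)) := by
    refine hgi.mono' (aestronglyMeasurable_of_tendsto_ae atTop hGm hGl) ?_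
    filter_upwards [hGl, ae_all_iff.2 hGb] with x hx1 hx2
    exact le_of_tendsto hx1.norm (Eventually.of_forall hx2)
  refine ⟨hintg, ?_⟩
  have hzero : Tendsto (fun n => ∫ x, G n x) atTop (𝓝 0) := by
    have hb : ∀ᶠ n : ℕ in atTop, ‖∫ x, G n x‖ ≤ 8 * Kt * (1 / ((n : ℝ) + 1)) := by
      obtain ⟨N, hN⟩ := exists_nat_gt R
      filter_upwards [eventually_ge_atTop N] with n hn
      have hn' : (N : ℝ) ≤ n := by exact_mod_cast hn
      set t : ℝ := (n : ℝ) + 1 with ht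
      have htR : R ≤ t := by linarith
      have ht1 : 1 ≤ t := by linarith
      have ht0 : 0 < 1 / t := by positivity
      have ht2 : 1 / t ≤ t := by
        rw [div_le_iff₀ (by linarith)]; nlinarith
      have hdiff : DifferentiableOn ℂ (fun z => F z / (z - ζ)) (Set.uIcc (-t) t ×ℂ Set.uIcc (1 / t) t) := by
        have hsub : (Set.uIcc (-t) t ×ℂ Set.uIcc (1 / t) t) ⊆ {z : ℂ | 0 < z.im} := by
          intro z hz
          have := hz.2
          rw [Set.mem_preimage, Set.uIcc_of_le ht2] at this
          exact lt_of_lt_of_le ht0 this.1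
        refine (h1.mono hsub).div (by fun_prop) ?_
        intro z hz h
        have h9 : 0 < z.im := hsub hz
        have := congrArg Complex.im h
        simp at this
        linarith
      have hrect := Complex.integral_boundary_rect_eq_zero_of_differentiableOn (fun z => F z / (z - ζ))
        ⟨-t, 1 / t⟩ ⟨t, t⟩ hdiff
      simp only at hrect
      have hbot : ∫ x, G n x = ∫ x in (-t)..t, F (x + ((1 / t : ℝ) : ℂ) * Complex.I) / (x + ((1 / t : ℝ) : ℂ) * Complex.I - ζ) := by
        rw [intervalIntegral.integral_of_le (by linarith), ← MeasureTheory.integral_indicator measurableSet_Ioc]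
      have htop : ‖∫ x in (-t)..t, F (x + (t : ℂ) * Complex.I) / (x + (t : ℂ) * Complex.I - ζ)‖ ≤ 2 * Kt / t ^ 2 * |t - -t| := by
        apply intervalIntegral.norm_integral_le_of_norm_le_const
        intro x _
        have him : ((x : ℂ) + (t : ℂ) * Complex.I).im = t := by simp
        refine hdec _ t (by rw [him]; linarith) htR ?_
        have := Complex.abs_im_le_norm ((x : ℂ) + (t : ℂ) * Complex.I)
        rw [him] at this
        exact (le_abs_self t).trans this
      have hside : ∀ c : ℝ, |c| = t → ‖∫ y in (1 / t)..t, F ((c : ℂ) + (y : ℂ) * Complex.I) / ((c : ℂ) + (y : ℂ) * Complex.I - ζ)‖ ≤ 2 * Kt / t ^ 2 * |t - 1 / t| := by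
        intro c hc
        apply intervalIntegral.norm_integral_le_of_norm_le_const
        intro y hy
        rw [Set.uIoc_of_le ht2] at hy
        have him : ((c : ℂ) + (y : ℂ) * Complex.I).im = y := by simp
        have hre : ((c : ℂ) + (y : ℂ) * Complex.I).re = c := by simp
        refine hdec _ t (by rw [him]; linarith [hy.1]) htR ?_
        have := Complex.abs_re_le_norm ((c : ℂ) + (y : ℂ) * Complex.I)
        rw [hre, hc] at this
        exact this
      have hs1 := hside t (abs_of_pos (by linarith))
      have hs2 := hside (-t) (by rw [abs_neg, abs_of_pos (by linarith)])
      rw [abs_of_nonneg (by linarith)] at htop hs1 hs2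
      have heq : ∫ x, G n x = (∫ x in (-t)..t, F (x + (t : ℂ) * Complex.I) / (x + (t : ℂ) * Complex.I - ζ))
          - Complex.I • (∫ y in (1 / t)..t, F ((t : ℂ) + (y : ℂ) * Complex.I) / ((t : ℂ) + (y : ℂ) * Complex.I - ζ))
          + Complex.I • (∫ y in (1 / t)..t, F (((-t : ℝ) : ℂ) + (y : ℂ) * Complex.I) / (((-t : ℝ) : ℂ) + (y : ℂ) * Complex.I - ζ)) := by
        rw [hbot]
        linear_combination hrect
      rw [heq]
      refine (norm_add_le _ _).trans ?_
      refine (add_le_add_left (norm_sub_le _ _) _).trans ?_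
      rw [norm_smul, norm_smul, Complex.norm_I, one_mul, one_mul]
      have e1 : 2 * Kt / t ^ 2 * (t - 1 / t) ≤ 2 * Kt / t ^ 2 * t := by
        gcongr; linarith
      have e2 : 8 * Kt * (1 / t) = 2 * Kt / t ^ 2 * (t - -t) + 2 * Kt / t ^ 2 * t + 2 * Kt / t ^ 2 * t := by
        field_simp; ring
      rw [e2]
      linarith
    refine squeeze_zero_norm' hb ?_
    have := tendsto_one_div_add_atTop_nhds_zero_nat (𝕜 := ℝ)
    simpa using this.const_mul (8 * Kt)
  exact tendsto_nhds_unique hlim hzero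
end Helpers

section Helpers
open MeasureTheory

lemma integral_poisson (s : ℝ) {η : ℝ} (hη : 0 < η) :
    Integrable (fun x : ℝ => η / ((x - s) ^ 2 + η ^ 2)) ∧ ∫ x : ℝ, η / ((x - s) ^ 2 + η ^ 2) = Real.pi := by
  have h1 : (fun x : ℝ => η / ((x - s) ^ 2 + η ^ 2)) = fun x : ℝ => η⁻¹ * (fun y : ℝ => (1 + (y / η) ^ 2)⁻¹) (x - s) := by
    funext x
    have : 0 < (x - s) ^ 2 + η ^ 2 := by positivity
    field_simp
    ring
  rw [h1]
  constructor
  · exact ((integrable_inv_one_add_sq.comp_div hη.ne').comp_sub_right s).const_mul _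
  · rw [MeasureTheory.integral_const_mul, integral_sub_right_eq_self (fun y : ℝ => (1 + (y / η) ^ 2)⁻¹) s,
      Measure.integral_comp_div (fun y : ℝ => (1 + y ^ 2)⁻¹) η, integral_univ_inv_one_add_sq, abs_of_pos hη, smul_eq_mul]
    field_simp

lemma poisson_le (u : ℝ) {η : ℝ} (hη : 0 < η) :
    η / (u ^ 2 + η ^ 2) ≤ (η + η⁻¹) * (1 + u ^ 2)⁻¹ := by
  rw [← div_eq_mul_inv, div_le_div_iff₀ (by positivity) (by positivity)]
  have h2 : (η + η⁻¹) * (u ^ 2 + η ^ 2) = η * u ^ 2 + η ^ 3 + u ^ 2 * η⁻¹ + η := by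
    field_simp; ring
  rw [h2]
  have : 0 ≤ u ^ 2 * η⁻¹ := by positivity
  have : 0 ≤ η ^ 3 := by positivity
  linarith

lemma poisson_mul_integrable {h : ℝ → ℝ} {s : ℝ} (hm : AEStronglyMeasurable h volume)
    (hi : Integrable (fun x => h x * (1 + (x - s) ^ 2)⁻¹))
    {η : ℝ} (hη : 0 < η) : Integrable (fun x => h x * (η / ((x - s) ^ 2 + η ^ 2))) := by
  refine (hi.norm.const_mul (η + η⁻¹)).mono' ?_ (Eventually.of_forall fun x => ?_)
  · exact hm.mul (by apply Measurable.aestronglyMeasurable; fun_prop)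
  · have := poisson_le (x - s) hη
    rw [norm_mul, norm_mul, Real.norm_of_nonneg (by positivity : 0 ≤ η / ((x - s) ^ 2 + η ^ 2)),
      Real.norm_of_nonneg (by positivity : 0 ≤ (1 + (x - s) ^ 2)⁻¹)]
    calc ‖h x‖ * (η / ((x - s) ^ 2 + η ^ 2)) ≤ ‖h x‖ * ((η + η⁻¹) * (1 + (x - s) ^ 2)⁻¹) := by gcongr
      _ = _ := by ring

lemma poisson_tendsto {h : ℝ → ℝ} {s : ℝ} (hm : AEStronglyMeasurable h volume)
    (hi : Integrable (fun x => h x * (1 + (x - s) ^ 2)⁻¹)) (hc : Tendsto h (𝓝 s) (𝓝 0)) :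
    Tendsto (fun η : ℝ => ∫ x, |h x| * (η / ((x - s) ^ 2 + η ^ 2))) (𝓝[>] 0) (𝓝 0) := by
  rw [Metric.tendsto_nhds]
  intro ε hε
  have hpi := Real.pi_pos
  set ε1 : ℝ := ε / (2 * Real.pi) with hε1
  have hεpos : 0 < ε1 := by positivity
  obtain ⟨δ0, hδ0, hδ⟩ := Metric.eventually_nhds_iff.1 (Metric.tendsto_nhds.1 hc ε1 hεpos)
  set δ : ℝ := min δ0 1 with hδd
  have hδp : 0 < δ := lt_min hδ0 one_pos
  have hδ1 : δ ≤ 1 := min_le_right _ _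
  set J : ℝ := ∫ x, |h x * (1 + (x - s) ^ 2)⁻¹| with hJ
  have hJ0 : 0 ≤ J := MeasureTheory.integral_nonneg fun x => abs_nonneg _
  have hlin : Tendsto (fun η : ℝ => 2 * η / δ ^ 2 * J) (𝓝[>] 0) (𝓝 0) := by
    have : Continuous (fun η : ℝ => 2 * η / δ ^ 2 * J) := by fun_prop
    have := (this.tendsto 0).mono_left (nhdsWithin_le_nhds (s := Set.Ioi (0 : ℝ)))
    simpa using this
  filter_upwards [self_mem_nhdsWithin, hlin.eventually (gt_mem_nhds (half_pos hε))] with η hη hsmall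
  have hη0 : 0 < η := hη
  have hP := integral_poisson s hη0
  have hnn : 0 ≤ ∫ x, |h x| * (η / ((x - s) ^ 2 + η ^ 2)) :=
    MeasureTheory.integral_nonneg fun x => by positivity
  rw [dist_zero_right, Real.norm_of_nonneg hnn]
  have hle : ∫ x, |h x| * (η / ((x - s) ^ 2 + η ^ 2)) ≤
      ∫ x, (ε1 * (η / ((x - s) ^ 2 + η ^ 2)) + 2 * η / δ ^ 2 * |h x * (1 + (x - s) ^ 2)⁻¹|) := by
    apply MeasureTheory.integral_mono_of_nonneg
    · exact Eventually.of_forall fun x => by positivity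
    · exact (hP.1.const_mul _).add (hi.abs.const_mul _)
    · refine Eventually.of_forall fun x => ?_
      have hk : 0 ≤ η / ((x - s) ^ 2 + η ^ 2) := by positivity
      simp only
      by_cases hx : |x - s| < δ
      · have h1 : |h x| < ε1 := by
          have := hδ (y := x) (by rw [Real.dist_eq]; exact hx.trans_le (min_le_left _ _))
          simpa using this
        have h2 : 0 ≤ 2 * η / δ ^ 2 * |h x * (1 + (x - s) ^ 2)⁻¹| := by positivity
        have h3 := mul_le_mul_of_nonneg_right h1.le hk
        linarith
      · push Not at hx
        have h4 : δ ^ 2 ≤ (x - s) ^ 2 := by rw [← sq_abs (x - s)]; gcongr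
        have h5 : δ ^ 2 ≤ 1 := pow_le_one₀ hδp.le hδ1
        have h6 : η / ((x - s) ^ 2 + η ^ 2) ≤ 2 * η / δ ^ 2 * (1 + (x - s) ^ 2)⁻¹ := by
          rw [← div_eq_mul_inv, div_div, div_le_div_iff₀ (by positivity) (by positivity)]
          have : δ ^ 2 * (1 + (x - s) ^ 2) ≤ 2 * (x - s) ^ 2 := by nlinarith [sq_nonneg (x - s)]
          have h7 : 0 ≤ η * η ^ 2 := by positivity
          nlinarith
        rw [abs_mul, abs_of_nonneg (by positivity : 0 ≤ (1 + (x - s) ^ 2)⁻¹)]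
        have h8 : 0 ≤ ε1 * (η / ((x - s) ^ 2 + η ^ 2)) := by positivity
        have h9 := mul_le_mul_of_nonneg_left h6 (abs_nonneg (h x))
        linarith
  rw [MeasureTheory.integral_add (hP.1.const_mul _) (hi.abs.const_mul _), MeasureTheory.integral_const_mul,
    MeasureTheory.integral_const_mul, hP.2] at hle
  have : ε1 * Real.pi = ε / 2 := by rw [hε1]; field_simp
  linarith

/-- Difference between the conjugate Poisson kernel and the truncated Hilbert kernel. -/
noncomputable def kdiff (η u : ℝ) : ℝ :=
  u / (u ^ 2 + η ^ 2) - Set.indicator {u : ℝ | η < |u|} (fun u => u⁻¹) u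

lemma kdiff_measurable (η : ℝ) : Measurable (kdiff η) := by
  unfold kdiff
  refine Measurable.sub (by fun_prop) (Measurable.indicator (by fun_prop) ?_)
  exact measurableSet_lt measurable_const (by fun_prop)

lemma kdiff_neg (η u : ℝ) : kdiff η (-u) = - kdiff η u := by
  unfold kdiff
  by_cases h : η < |u|
  · rw [Set.indicator_of_mem (by simpa using h), Set.indicator_of_mem (by simpa using h), neg_sq, inv_neg]
    ring
  · rw [Set.indicator_of_notMem (by simpa using h), Set.indicator_of_notMem (by simpa using h), neg_sq]
    ring

lemma kdiff_bound {η : ℝ} (hη : 0 < η) (u : ℝ) : |kdiff η u| ≤ η / (u ^ 2 + η ^ 2) := by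
  unfold kdiff
  by_cases h : η < |u|
  · rw [Set.indicator_of_mem (by simpa using h)]
    have hu : u ≠ 0 := by rintro rfl; simp at h; linarith
    have h1 : u / (u ^ 2 + η ^ 2) - u⁻¹ = - (η ^ 2 / (u * (u ^ 2 + η ^ 2))) := by
      have : u ^ 2 + η ^ 2 ≠ 0 := by positivity
      field_simp; ring
    have hp : 0 < u ^ 2 + η ^ 2 := by positivity
    rw [h1, abs_neg, abs_div, abs_mul, abs_of_pos hp, abs_of_nonneg (sq_nonneg η),
      div_le_div_iff₀ (by positivity) hp]
    have : η ^ 2 ≤ η * |u| := by nlinarith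
    nlinarith
  · rw [Set.indicator_of_notMem (by simpa using h), sub_zero, abs_div, abs_of_pos (by positivity : 0 < u ^ 2 + η ^ 2)]
    push Not at h
    gcongr

lemma kdiff_integral_zero (s : ℝ) (η : ℝ) :
    ∫ x, Set.indicator (Set.Ioo (s - 1) (s + 1)) (fun x => kdiff η (x - s)) x = 0 := by
  set q : ℝ → ℝ := Set.indicator (Set.Ioo (s - 1) (s + 1)) (fun x => kdiff η (x - s)) with hq
  have h1 : ∫ x, q (2 * s - x) = ∫ x, q x := integral_sub_left_eq_self q volume (2 * s)
  have h2 : (fun x => q (2 * s - x)) = fun x => - q x := by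
    funext x
    by_cases hx : x ∈ Set.Ioo (s - 1) (s + 1)
    · have hx' : 2 * s - x ∈ Set.Ioo (s - 1) (s + 1) := ⟨by linarith [hx.2], by linarith [hx.1]⟩
      rw [hq, Set.indicator_of_mem hx, Set.indicator_of_mem hx', ← kdiff_neg]
      congr 1; ring
    · have hx' : 2 * s - x ∉ Set.Ioo (s - 1) (s + 1) := fun h => hx ⟨by linarith [h.2], by linarith [h.1]⟩
      rw [hq, Set.indicator_of_notMem hx, Set.indicator_of_notMem hx', neg_zero]
  rw [h2, MeasureTheory.integral_neg] at h1
  linarith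

lemma integrable_mul_inv_one_add {h : ℝ → ℝ} (hi : Integrable h) (s : ℝ) :
    Integrable (fun x => h x * (1 + (x - s) ^ 2)⁻¹) := by
  refine hi.norm.mono' (hi.1.mul (by apply Measurable.aestronglyMeasurable; fun_prop)) (Eventually.of_forall fun x => ?_)
  rw [norm_mul]
  have : ‖(1 + (x - s) ^ 2)⁻¹‖ ≤ 1 := by
    rw [Real.norm_of_nonneg (by positivity)]
    exact inv_le_one_of_one_le₀ (by nlinarith [sq_nonneg (x - s)])
  exact mul_le_of_le_one_right (norm_nonneg _) this

lemma conj_poisson_sub_pv {V : ℝ → ℝ} {A B s : ℝ} (hA : A < s) (hB : s < B) (hV : Integrable V)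
    (hout : ∀ x, x < A ∨ B < x → V x = 0) (hc : ContinuousAt V s) :
    Tendsto (fun η : ℝ => (∫ x, V x * ((x - s) / ((x - s) ^ 2 + η ^ 2))) - pvApprox A B V s η) (𝓝[>] 0) (𝓝 0) := by
  set χ : ℝ → ℝ := Set.indicator (Set.Ioo (s - 1) (s + 1)) (fun _ => V s) with hχ
  have hχi : Integrable χ := by
    rw [hχ, integrable_indicator_iff measurableSet_Ioo]
    exact integrableOn_const (by simp)
  have hsub : Integrable (fun x => V x - χ x) := hV.sub hχi
  have hχs : ∀ᶠ x in 𝓝 s, V x - χ x = V x - V s := by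
    filter_upwards [Ioo_mem_nhds (show s - 1 < s by linarith) (show s < s + 1 by linarith)] with x hx
    rw [hχ, Set.indicator_of_mem hx]
  have htend : Tendsto (fun x => V x - χ x) (𝓝 s) (𝓝 0) := by
    have : Tendsto (fun x => V x - V s) (𝓝 s) (𝓝 (V s - V s)) := hc.tendsto.sub_const _
    rw [sub_self] at this
    exact this.congr' (hχs.mono fun x hx => hx.symm)
  have hP := poisson_tendsto hsub.1 (integrable_mul_inv_one_add hsub s) htend
  refine squeeze_zero_norm' ?_ hP
  have hev : ∀ᶠ ε : ℝ in 𝓝[>] 0, ε ∈ Set.Ioo 0 (min (s - A) (B - s)) :=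
    Ioo_mem_nhdsGT (by apply lt_min <;> linarith)
  filter_upwards [hev] with η hη
  have he0 := hη.1
  have heA : η < s - A := hη.2.trans_le (min_le_left _ _)
  have heB : η < B - s := hη.2.trans_le (min_le_right _ _)
  have bmul : ∀ (h k : ℝ → ℝ) (c : ℝ), Integrable h → Measurable k → (∀ x, |k x| ≤ c) → Integrable (fun x => h x * k x) := by
    intro h k c hh hk hb
    exact hh.mul_bdd hk.aestronglyMeasurable (Eventually.of_forall hb)
  have hPle : ∀ x : ℝ, η / ((x - s) ^ 2 + η ^ 2) ≤ η⁻¹ := by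
    intro x
    rw [div_le_iff₀ (by positivity)]
    have : η⁻¹ * ((x - s) ^ 2 + η ^ 2) = η⁻¹ * (x - s) ^ 2 + η := by field_simp
    rw [this]
    have : 0 ≤ η⁻¹ * (x - s) ^ 2 := by positivity
    linarith
  have hkm : Measurable (fun x => kdiff η (x - s)) := (kdiff_measurable η).comp (by fun_prop)
  have hkb : ∀ x, |kdiff η (x - s)| ≤ η⁻¹ := fun x => (kdiff_bound he0 _).trans (hPle x)
  set tr : ℝ → ℝ := fun x => Set.indicator {u : ℝ | η < |u|} (fun u => u⁻¹) (x - s) with htr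
  have htrm : Measurable tr := by
    have : Measurable (Set.indicator {u : ℝ | η < |u|} (fun u => u⁻¹)) :=
      Measurable.indicator (by fun_prop) (measurableSet_lt measurable_const (by fun_prop))
    exact this.comp (by fun_prop)
  have htrb : ∀ x, |tr x| ≤ η⁻¹ := by
    intro x
    rw [htr]
    by_cases h : η < |x - s|
    · simp only
      rw [Set.indicator_of_mem (by simpa using h), abs_inv]
      exact inv_anti₀ he0 h.le
    · simp only
      rw [Set.indicator_of_notMem (by simpa using h), abs_zero]
      positivity
  have hVk := bmul V _ _ hV hkm hkb
  have hVtr := bmul V _ _ hV htrm htrb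
  have hχk := bmul χ _ _ hχi hkm hkb
  have hpv : pvApprox A B V s η = ∫ x, V x * tr x := by
    have hne : ∀ c : ℝ, ∀ᵐ u : ℝ, u ≠ c := fun c => by
      rw [ae_iff]; simp
    rw [pvApprox, intervalIntegral.integral_of_le (by linarith), intervalIntegral.integral_of_le (by linarith),
      ← setIntegral_union]
    · rw [← MeasureTheory.integral_indicator (by measurability)]
      apply MeasureTheory.integral_congr_ae
      filter_upwards [hne A, hne (s - η)] with x hxA hxs
      by_cases hx : x ∈ Set.Ioc A (s - η) ∪ Set.Ioc (s + η) B
      · rw [Set.indicator_of_mem hx, htr]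
        have : η < |x - s| := by
          rcases hx with hx | hx
          · rw [lt_abs]; right
            have := lt_of_le_of_ne hx.2 hxs
            linarith
          · rw [lt_abs]; left; linarith [hx.1]
        simp only
        rw [Set.indicator_of_mem (by simpa using this), div_eq_mul_inv]
      · rw [Set.indicator_of_notMem hx]
        by_cases ho : x < A ∨ B < x
        · rw [hout x ho, zero_mul]
        · push Not at ho
          have : ¬ η < |x - s| := by
            intro hcon
            apply hx
            rcases lt_abs.1 hcon with h | h
            · right; exact ⟨by linarith, ho.2⟩
            · left; exact ⟨lt_of_le_of_ne ho.1 (Ne.symm hxA), by linarith⟩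
          rw [htr]
          simp only
          rw [Set.indicator_of_notMem (by simpa using this), mul_zero]
    · rw [Set.disjoint_left]
      intro x h1 h2
      linarith [h1.2, h2.1]
    · exact measurableSet_Ioc
    · refine hVtr.integrableOn.congr_fun_ae ?_
      rw [EventuallyEq, ae_restrict_iff' measurableSet_Ioc]
      filter_upwards [hne (s - η)] with x hxs hx
      have : η < |x - s| := by
        rw [lt_abs]; right
        have := lt_of_le_of_ne hx.2 hxs
        linarith
      rw [htr]
      simp only
      rw [Set.indicator_of_mem (by simpa using this), div_eq_mul_inv]
    · refine hVtr.integrableOn.congr_fun ?_ measurableSet_Ioc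
      intro x hx
      have : η < |x - s| := by
        rw [lt_abs]; left; linarith [hx.1]
      rw [htr]
      simp only
      rw [Set.indicator_of_mem (by simpa using this), div_eq_mul_inv]
  have hsum : ∫ x, V x * ((x - s) / ((x - s) ^ 2 + η ^ 2)) = (∫ x, V x * kdiff η (x - s)) + ∫ x, V x * tr x := by
    rw [← MeasureTheory.integral_add hVk hVtr]
    congr 1
    funext x
    rw [htr, kdiff]
    ring
  have hz : ∫ x, χ x * kdiff η (x - s) = 0 := by
    have h1 : (fun x => χ x * kdiff η (x - s)) = fun x => V s * Set.indicator (Set.Ioo (s - 1) (s + 1)) (fun x => kdiff η (x - s)) x := by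
      funext x
      rw [hχ]
      by_cases hx : x ∈ Set.Ioo (s - 1) (s + 1)
      · rw [Set.indicator_of_mem hx, Set.indicator_of_mem hx]
      · rw [Set.indicator_of_notMem hx, Set.indicator_of_notMem hx]; simp
    rw [h1, MeasureTheory.integral_const_mul, kdiff_integral_zero, mul_zero]
  have hfin : (∫ x, V x * ((x - s) / ((x - s) ^ 2 + η ^ 2))) - pvApprox A B V s η = ∫ x, (V x - χ x) * kdiff η (x - s) := by
    have h1 : (fun x => (V x - χ x) * kdiff η (x - s)) = fun x => V x * kdiff η (x - s) - χ x * kdiff η (x - s) := by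
      funext x; ring
    rw [h1, MeasureTheory.integral_sub hVk hχk, hz, hsum, hpv]
    ring
  rw [hfin]
  refine MeasureTheory.norm_integral_le_of_norm_le
    (poisson_mul_integrable hsub.1.norm (by simpa using integrable_mul_inv_one_add hsub.norm s) he0) (Eventually.of_forall fun x => ?_)
  rw [norm_mul]
  exact mul_le_mul_of_nonneg_left (kdiff_bound he0 _) (norm_nonneg _)

end Helpers

section Helpers
open MeasureTheory

lemma pv_of_vanish {F : ℂ → ℂ} {A B s : ℝ} (hA : A < s) (hB : s < B)
    (hvan : ∀ ζ : ℂ, ζ.im < 0 → Integrable (fun x : ℝ => F x / ((x : ℂ) - ζ)) ∧ ∫ x : ℝ, F x / ((x : ℂ) - ζ) = 0)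
    (hout : ∀ x : ℝ, x < A ∨ B < x → (F x).im = 0) (hc : ContinuousAt F (s : ℂ)) :
    Tendsto (pvApprox A B (fun x => (F x).im) s) (𝓝[>] 0) (𝓝 (Real.pi * (F s).re)) := by
  have hden : ∀ (x η : ℝ), 0 < η → ‖(x : ℂ) - (⟨s, -η⟩ : ℂ)‖ ^ 2 = (x - s) ^ 2 + η ^ 2 := by
    intro x η _
    rw [← Complex.normSq_eq_norm_sq, Complex.normSq_apply]
    simp
    ring
  have hneC : ∀ (x η : ℝ), 0 < η → (x : ℂ) - (⟨s, -η⟩ : ℂ) ≠ 0 := by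
    intro x η hη h
    have := congrArg Complex.im h
    simp at this
    exact hη.ne' this
  obtain ⟨h1i, -⟩ := hvan ⟨s, -1⟩ (by simp)
  have hFm : AEStronglyMeasurable (fun x : ℝ => F x) volume := by
    have h : (fun x : ℝ => F x) = fun x : ℝ => F x / ((x : ℂ) - ⟨s, -1⟩) * ((x : ℂ) - ⟨s, -1⟩) := by
      funext x
      rw [div_mul_cancel₀ _ (hneC x 1 one_pos)]
    rw [h]
    exact h1i.1.mul (by apply Continuous.aestronglyMeasurable; fun_prop)
  set U : ℝ → ℝ := fun x => (F x).re with hU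
  set V : ℝ → ℝ := fun x => (F x).im with hV
  have hUm : AEStronglyMeasurable U volume := Complex.continuous_re.comp_aestronglyMeasurable hFm
  have hVm : AEStronglyMeasurable V volume := Complex.continuous_im.comp_aestronglyMeasurable hFm
  have hUi : Integrable (fun x => U x * (1 + (x - s) ^ 2)⁻¹) := by
    refine h1i.norm.mono' (hUm.mul (by apply Measurable.aestronglyMeasurable; fun_prop)) (Eventually.of_forall fun x => ?_)
    have hd := hden x 1 one_pos
    have hpos : 0 < ‖(x : ℂ) - (⟨s, -1⟩ : ℂ)‖ := norm_pos_iff.2 (hneC x 1 one_pos)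
    have hge : 1 ≤ ‖(x : ℂ) - (⟨s, -1⟩ : ℂ)‖ := by nlinarith [sq_nonneg (x - s)]
    rw [norm_mul, norm_div, Real.norm_of_nonneg (by positivity : 0 ≤ (1 + (x - s) ^ 2)⁻¹), ← div_eq_mul_inv]
    apply div_le_div₀ (norm_nonneg _) (Complex.abs_re_le_norm _) hpos
    nlinarith
  have hVi : Integrable V := by
    refine (h1i.norm.mul_const ((B - A) + 1)).mono' hVm (Eventually.of_forall fun x => ?_)
    have hpos : 0 < ‖(x : ℂ) - (⟨s, -1⟩ : ℂ)‖ := norm_pos_iff.2 (hneC x 1 one_pos)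
    by_cases ho : x < A ∨ B < x
    · rw [hV]; simp only; rw [hout x ho, norm_zero]
      have : 0 ≤ B - A := by linarith
      positivity
    · push Not at ho
      have hle : ‖(x : ℂ) - (⟨s, -1⟩ : ℂ)‖ ≤ (B - A) + 1 := by
        have := Complex.norm_le_abs_re_add_abs_im ((x : ℂ) - (⟨s, -1⟩ : ℂ))
        simp only [Complex.sub_re, Complex.ofReal_re, Complex.sub_im, Complex.ofReal_im] at this
        have h5 : |x - s| ≤ B - A := by rw [abs_le]; constructor <;> linarith [ho.1, ho.2]
        norm_num at this
        linarith
      rw [norm_div, div_mul_eq_mul_div, le_div_iff₀ hpos]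
      exact mul_le_mul (Complex.abs_im_le_norm _) hle hpos.le (norm_nonneg _)
  have hcR : ContinuousAt (fun x : ℝ => F x) s :=
    ContinuousAt.comp (f := fun x : ℝ => (x : ℂ)) hc Complex.continuous_ofReal.continuousAt
  have hUc : ContinuousAt U s := Complex.continuous_re.continuousAt.comp hcR
  have hVc : ContinuousAt V s := Complex.continuous_im.continuousAt.comp hcR
  have hrel : ∀ η : ℝ, 0 < η → ∫ x, V x * ((x - s) / ((x - s) ^ 2 + η ^ 2)) = ∫ x, U x * (η / ((x - s) ^ 2 + η ^ 2)) := by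
    intro η hη
    obtain ⟨hi, h0⟩ := hvan ⟨s, -η⟩ (by simpa using hη)
    have hUP := poisson_mul_integrable hUm hUi hη
    have him : ∀ x : ℝ, (F x / ((x : ℂ) - ⟨s, -η⟩)).im = V x * ((x - s) / ((x - s) ^ 2 + η ^ 2)) - U x * (η / ((x - s) ^ 2 + η ^ 2)) := by
      intro x
      rw [Complex.div_im, Complex.normSq_eq_norm_sq, hden x η hη]
      simp
      ring
    have hii : Integrable (fun x : ℝ => (F x / ((x : ℂ) - ⟨s, -η⟩)).im) := hi.im
    have h2 : ∫ x : ℝ, (F x / ((x : ℂ) - ⟨s, -η⟩)).im = 0 := by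
      have := Complex.imCLM.integral_comp_comm hi
      rw [h0] at this
      simpa using this
    have hVP : Integrable (fun x => V x * ((x - s) / ((x - s) ^ 2 + η ^ 2))) := by
      refine (hii.add hUP).congr (Eventually.of_forall fun x => ?_)
      simp only [Pi.add_apply]
      rw [him x]; ring
    simp_rw [him] at h2
    rw [MeasureTheory.integral_sub hVP hUP] at h2
    linarith
  have hUlim : Tendsto (fun η : ℝ => ∫ x, U x * (η / ((x - s) ^ 2 + η ^ 2))) (𝓝[>] 0) (𝓝 (Real.pi * U s)) := by
    have hPc : Integrable (fun x : ℝ => (1 + (x - s) ^ 2)⁻¹) := integrable_inv_one_add_sq.comp_sub_right s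
    have hsm : AEStronglyMeasurable (fun x => U x - U s) volume := hUm.sub aestronglyMeasurable_const
    have hsi : Integrable (fun x => (U x - U s) * (1 + (x - s) ^ 2)⁻¹) := by
      refine (hUi.sub (hPc.const_mul (U s))).congr (Eventually.of_forall fun x => ?_)
      simp only [Pi.sub_apply]
      ring
    have ht : Tendsto (fun x => U x - U s) (𝓝 s) (𝓝 0) := by
      have : Tendsto (fun x => U x - U s) (𝓝 s) (𝓝 (U s - U s)) := hUc.tendsto.sub_const _
      rwa [sub_self] at this
    have hP := poisson_tendsto hsm hsi ht
    rw [tendsto_iff_norm_sub_tendsto_zero]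
    refine squeeze_zero' (Eventually.of_forall fun _ => norm_nonneg _) ?_ hP
    filter_upwards [self_mem_nhdsWithin] with η hη
    have hη0 : 0 < η := hη
    have hI := integral_poisson s hη0
    have e1 : (∫ x, U x * (η / ((x - s) ^ 2 + η ^ 2))) - Real.pi * U s = ∫ x, (U x - U s) * (η / ((x - s) ^ 2 + η ^ 2)) := by
      simp_rw [sub_mul]
      rw [MeasureTheory.integral_sub (poisson_mul_integrable hUm hUi hη0) (hI.1.const_mul _), MeasureTheory.integral_const_mul, hI.2]
      ring
    rw [e1]
    refine (MeasureTheory.norm_integral_le_integral_norm _).trans (le_of_eq ?_)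
    congr 1
    funext x
    rw [norm_mul, Real.norm_of_nonneg (by positivity : 0 ≤ η / ((x - s) ^ 2 + η ^ 2)), Real.norm_eq_abs]
  have hD := conj_poisson_sub_pv hA hB hVi hout hVc
  have := hUlim.sub hD
  rw [sub_zero] at this
  refine this.congr' ?_
  filter_upwards [self_mem_nhdsWithin] with η hη
  rw [hrel η hη]
  ring

lemma exp_log_ratio_bound {a b D xa : ℝ} (ha : 0 < a) (hb : 0 < b) (hD : 0 ≤ D) (hba : b ≤ a + D) (hx : 0 < xa) (hxa : xa ≤ a) :
    Real.exp (3 / 4 * (Real.log b - Real.log a)) ≤ 1 + D ^ (3/4 : ℝ) * xa ^ (-(3/4) : ℝ) := by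
  have h1 : Real.exp (3 / 4 * (Real.log b - Real.log a)) = (b / a) ^ (3/4 : ℝ) := by
    rw [Real.rpow_def_of_pos (by positivity), Real.log_div hb.ne' ha.ne', mul_comm]
  rw [h1]
  have h2 : b / a ≤ 1 + D / xa := by
    calc b / a ≤ (a + D) / a := by gcongr
      _ = 1 + D / a := by field_simp
      _ ≤ 1 + D / xa := by gcongr
  calc (b / a) ^ (3/4 : ℝ) ≤ (1 + D / xa) ^ (3/4 : ℝ) := Real.rpow_le_rpow (by positivity) h2 (by norm_num)
    _ ≤ 1 ^ (3/4 : ℝ) + (D / xa) ^ (3/4 : ℝ) := Real.rpow_add_le_add_rpow (by norm_num) (by positivity) (by norm_num) (by norm_num)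
    _ = 1 + D ^ (3/4 : ℝ) * xa ^ (-(3/4) : ℝ) := by
      rw [Real.one_rpow, Real.div_rpow hD hx.le, Real.rpow_neg hx.le, div_eq_mul_inv]

lemma F_bound {A B : ℝ} (hAB : A ≤ B) {f g : ℝ → ℝ} {Kf Kg M : ℝ} (hKg : 0 ≤ Kg)
    (hf : ∀ x, |f x| ≤ 1 / 2) (hg : ∀ x, |g x| ≤ M)
    (hKf : ∀ z, ‖cauReg A B f z‖ ≤ Kf) (hKg' : ∀ z, ‖cauReg A B g z‖ ≤ Kg) :
    ∃ K : ℝ, 0 ≤ K ∧ ∀ z : ℂ, 0 ≤ z.im → z.re ≠ A → z.re ≠ B →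
      ‖Complex.exp (-cauExt A B f z) * cauExt A B g z‖ ≤
        K * (1 + |z.re - A| ^ (-(3/4) : ℝ) + |z.re - B| ^ (-(3/4) : ℝ)) := by
  have hM0 : 0 ≤ M := (abs_nonneg _).trans (hg 0)
  have hpi := Real.pi_pos
  set D : ℝ := B - A with hD
  have hD0 : 0 ≤ D := by linarith
  set K1 : ℝ := Kg + M * (4 + 2 * Real.pi) with hK1
  have hK10 : 0 ≤ K1 := by positivity
  refine ⟨Real.exp Kf * K1 * (2 + D ^ (3/4 : ℝ)), by positivity, ?_⟩
  intro z _ hzA hzB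
  set a : ℝ := ‖Complex.I * ((A : ℂ) - z)‖ with ha
  set b : ℝ := ‖Complex.I * ((B : ℂ) - z)‖ with hb
  have ha' : a = ‖(A : ℂ) - z‖ := by rw [ha, norm_mul, Complex.norm_I, one_mul]
  have hb' : b = ‖(B : ℂ) - z‖ := by rw [hb, norm_mul, Complex.norm_I, one_mul]
  have hxa : |z.re - A| ≤ a := by
    rw [ha', abs_sub_comm]; simpa using Complex.abs_re_le_norm ((A : ℂ) - z)
  have hxb : |z.re - B| ≤ b := by
    rw [hb', abs_sub_comm]; simpa using Complex.abs_re_le_norm ((B : ℂ) - z)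
  have hxa0 : 0 < |z.re - A| := abs_pos.2 (sub_ne_zero.2 hzA)
  have hxb0 : 0 < |z.re - B| := abs_pos.2 (sub_ne_zero.2 hzB)
  have ha0 : 0 < a := hxa0.trans_le hxa
  have hb0 : 0 < b := hxb0.trans_le hxb
  have hnD : ‖(B : ℂ) - A‖ = D := by
    rw [← Complex.ofReal_sub, Complex.norm_real, Real.norm_of_nonneg hD0]
  have hba : b ≤ a + D := by
    rw [ha', hb', ← hnD]
    calc ‖(B : ℂ) - z‖ = ‖((A : ℂ) - z) + ((B : ℂ) - A)‖ := by congr 1; ring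
      _ ≤ _ := norm_add_le _ _
  have hab : a ≤ b + D := by
    rw [ha', hb', ← hnD]
    calc ‖(A : ℂ) - z‖ = ‖((B : ℂ) - z) - ((B : ℂ) - A)‖ := by congr 1; ring
      _ ≤ _ := norm_sub_le _ _
  set l : ℝ := Real.log b - Real.log a with hl
  have hre : (cauLog A B z).re = l := by
    rw [cauLog, Complex.sub_re, Complex.log_re, Complex.log_re]
  have him : |(cauLog A B z).im| ≤ 2 * Real.pi := by
    rw [cauLog, Complex.sub_im, Complex.log_im, Complex.log_im]
    refine (abs_sub _ _).trans ?_
    have := Complex.abs_arg_le_pi (Complex.I * ((A : ℂ) - z))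
    have := Complex.abs_arg_le_pi (Complex.I * ((B : ℂ) - z))
    linarith
  have hE0 : 1 ≤ Real.exp (|l| / 4) := Real.one_le_exp (by positivity)
  have hE1 : |l| ≤ 4 * Real.exp (|l| / 4) := by
    have := Real.add_one_le_exp (|l| / 4)
    linarith
  have hlogn : ‖cauLog A B z‖ ≤ |l| + 2 * Real.pi := by
    have := Complex.norm_le_abs_re_add_abs_im (cauLog A B z)
    rw [hre] at this
    linarith
  have hg1 : ‖cauExt A B g z‖ ≤ K1 * Real.exp (|l| / 4) := by
    calc ‖cauExt A B g z‖ ≤ ‖cauReg A B g z‖ + ‖(g z.re : ℂ) * cauLog A B z‖ := norm_add_le _ _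
      _ ≤ Kg + M * (|l| + 2 * Real.pi) := by
        rw [norm_mul, Complex.norm_real]
        exact add_le_add (hKg' z) (mul_le_mul (hg _) hlogn (norm_nonneg _) hM0)
      _ ≤ Kg * Real.exp (|l| / 4) + M * (4 * Real.exp (|l| / 4) + 2 * Real.pi * Real.exp (|l| / 4)) := by
        have e1 : Kg ≤ Kg * Real.exp (|l| / 4) := le_mul_of_one_le_right hKg hE0
        have e2 : 2 * Real.pi ≤ 2 * Real.pi * Real.exp (|l| / 4) := le_mul_of_one_le_right (by positivity) hE0
        have e3 := mul_le_mul_of_nonneg_left (add_le_add hE1 e2) hM0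
        linarith
      _ = K1 * Real.exp (|l| / 4) := by rw [hK1]; ring
  have hf1 : ‖Complex.exp (-cauExt A B f z)‖ ≤ Real.exp Kf * Real.exp (|l| / 2) := by
    rw [Complex.norm_exp, ← Real.exp_add, Real.exp_le_exp, Complex.neg_re, cauExt, Complex.add_re, Complex.re_ofReal_mul, hre]
    have e1 : -(cauReg A B f z).re ≤ Kf := (neg_le_abs _).trans ((Complex.abs_re_le_norm _).trans (hKf z))
    have e2 : -(f z.re * l) ≤ |l| / 2 := by
      refine (neg_le_abs _).trans ?_
      rw [abs_mul]
      have := mul_le_mul_of_nonneg_right (hf z.re) (abs_nonneg l)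
      linarith
    linarith
  have hexp : Real.exp (3 / 4 * |l|) ≤ (2 + D ^ (3/4 : ℝ)) * (1 + |z.re - A| ^ (-(3/4) : ℝ) + |z.re - B| ^ (-(3/4) : ℝ)) := by
    have r1 := exp_log_ratio_bound ha0 hb0 hD0 hba hxa0 hxa
    have r2 := exp_log_ratio_bound hb0 ha0 hD0 hab hxb0 hxb
    have p1 : 0 ≤ |z.re - A| ^ (-(3/4) : ℝ) := by positivity
    have p2 : 0 ≤ |z.re - B| ^ (-(3/4) : ℝ) := by positivity
    have p3 : 0 ≤ D ^ (3/4 : ℝ) := by positivity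
    have p4 := mul_nonneg p3 p1
    have p5 := mul_nonneg p3 p2
    rcases abs_cases l with ⟨h, _⟩ | ⟨h, _⟩
    · rw [h]; nlinarith
    · rw [h, show -l = Real.log a - Real.log b by rw [hl]; ring]; nlinarith
  rw [norm_mul]
  calc _ ≤ (Real.exp Kf * Real.exp (|l| / 2)) * (K1 * Real.exp (|l| / 4)) :=
        mul_le_mul hf1 hg1 (norm_nonneg _) (by positivity)
    _ = Real.exp Kf * K1 * Real.exp (3 / 4 * |l|) := by
        rw [show 3 / 4 * |l| = |l| / 2 + |l| / 4 by ring, Real.exp_add]; ring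
    _ ≤ Real.exp Kf * K1 * ((2 + D ^ (3/4 : ℝ)) * (1 + |z.re - A| ^ (-(3/4) : ℝ) + |z.re - B| ^ (-(3/4) : ℝ))) := by
        gcongr
    _ = _ := by ring

lemma F_tail {A B : ℝ} (hAB : A ≤ B) {f g : ℝ → ℝ} {M : ℝ} (hfc : Continuous f) (hgc : Continuous g)
    (hf : ∀ x, |f x| ≤ 1 / 2) (hg : ∀ x, |g x| ≤ M) (z : ℂ) (hz : 0 < z.im) (hR : 2 * (|A| + |B| + 1) ≤ ‖z‖) :
    ‖Complex.exp (-cauExt A B f z) * cauExt A B g z‖ ≤ (Real.exp (B - A) * (2 * M * (B - A))) / ‖z‖ := by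
  rw [cauExt_eq_cau hfc hz, cauExt_eq_cau hgc hz, norm_mul]
  have h1 := cau_tail hAB hf hR
  have h2 := cau_tail hAB hg hR
  have hz1 : 1 ≤ ‖z‖ := by linarith [abs_nonneg A, abs_nonneg B]
  have h3 : ‖Complex.exp (-cau A B f z)‖ ≤ Real.exp (B - A) := by
    rw [Complex.norm_exp, Real.exp_le_exp, Complex.neg_re]
    refine (neg_le_abs _).trans ((Complex.abs_re_le_norm _).trans (h1.trans ?_))
    rw [show (2 * (1 / 2) * (B - A) : ℝ) = B - A by ring]
    exact div_le_self (by linarith) hz1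
  rw [mul_div_assoc]
  exact mul_le_mul h3 h2 (norm_nonneg _) (Real.exp_pos _).le

/-- The principal-value identity for globally Hölder data. -/
lemma key_identity {A B s : ℝ} (hA : A < s) (hB : s < B) {f g : ℝ → ℝ} {Cf γf Cg γg M : ℝ}
    (hCf : 0 ≤ Cf) (hγf : 0 < γf) (hγf1 : γf ≤ 1) (hfH : ∀ x y, |f x - f y| ≤ Cf * |x - y| ^ γf)
    (hCg : 0 ≤ Cg) (hγg : 0 < γg) (hγg1 : γg ≤ 1) (hgH : ∀ x y, |g x - g y| ≤ Cg * |x - y| ^ γg)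
    (hf : ∀ x, |f x| ≤ 1 / 2) (hg : ∀ x, |g x| ≤ M) :
    Tendsto (pvApprox A B (fun x => (Complex.exp (-cauExt A B f x) * cauExt A B g x).im) s) (𝓝[>] 0)
      (𝓝 (Real.pi * (Complex.exp (-cauExt A B f s) * cauExt A B g s).re)) := by
  have hAB : A ≤ B := by linarith
  have hM0 : 0 ≤ M := (abs_nonneg _).trans (hg 0)
  have hfc := holder_cont hγf hfH
  have hgc := holder_cont hγg hgH
  obtain ⟨Kf, _, hKf⟩ := cauReg_bound hAB hCf hγf hγf1 hfH
  obtain ⟨Kg, hKg0, hKg⟩ := cauReg_bound hAB hCg hγg hγg1 hgH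
  obtain ⟨K, hK0, hK⟩ := F_bound hAB hKg0 hf hg hKf hKg
  have hcont : ∀ z : ℂ, 0 ≤ z.im → z ≠ A → z ≠ B →
      ContinuousAt (fun z => Complex.exp (-cauExt A B f z) * cauExt A B g z) z := by
    intro z hz hzA hzB
    exact (cauExt_continuousAt hAB hCf hγf hfH hz hzA hzB).neg.cexp.mul (cauExt_continuousAt hAB hCg hγg hgH hz hzA hzB)
  have hdiff : DifferentiableOn ℂ (fun z => Complex.exp (-cauExt A B f z) * cauExt A B g z) {z | 0 < z.im} := by
    have : DifferentiableOn ℂ (fun z => Complex.exp (-cau A B f z) * cau A B g z) {z | 0 < z.im} := by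
      intro z hz
      exact ((cau_differentiableAt hfc hf hz).neg.cexp.mul (cau_differentiableAt hgc hg hz)).differentiableWithinAt
    refine this.congr fun z hz => ?_
    rw [cauExt_eq_cau hfc hz, cauExt_eq_cau hgc hz]
  have hBA : 0 ≤ B - A := by linarith
  refine pv_of_vanish (F := fun z => Complex.exp (-cauExt A B f z) * cauExt A B g z) hA hB ?_ ?_ ?_
  · intro ζ hζ
    exact half_plane_vanish (F := fun z => Complex.exp (-cauExt A B f z) * cauExt A B g z) hK0
      (Kt := Real.exp (B - A) * (2 * M * (B - A))) (by positivity) hdiff hcont hK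
      (fun z hz hR => F_tail hAB hfc hgc hf hg z hz hR) hζ
  · intro x hx
    have h1 := cauExt_outside hAB f hx
    have h2 := cauExt_outside hAB g hx
    rw [Complex.mul_im, Complex.exp_im, h2, Complex.neg_im, h1]
    simp
  · exact hcont s (by simp) (by exact_mod_cast hA.ne') (by exact_mod_cast hB.ne)

lemma pvApprox_congr {A B s : ℝ} (hA : A < s) (hB : s < B) {f g : ℝ → ℝ} (h : ∀ x ∈ Set.Ioo A B, f x = g x) :
    pvApprox A B f s =ᶠ[𝓝[>] 0] pvApprox A B g s := by
  have hev : ∀ᶠ ε : ℝ in 𝓝[>] 0, ε ∈ Set.Ioo 0 (min (s - A) (B - s)) :=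
    Ioo_mem_nhdsGT (by apply lt_min <;> linarith)
  filter_upwards [hev] with η hη
  have he0 := hη.1
  have heA : η < s - A := hη.2.trans_le (min_le_left _ _)
  have heB : η < B - s := hη.2.trans_le (min_le_right _ _)
  have hne : ∀ᵐ u : ℝ, u ≠ B := by rw [ae_iff]; simp
  unfold pvApprox
  congr 1
  · apply intervalIntegral.integral_congr_ae
    refine Eventually.of_forall fun x hx => ?_
    rw [Set.uIoc_of_le (by linarith)] at hx
    rw [h x ⟨hx.1, by linarith [hx.2]⟩]
  · apply intervalIntegral.integral_congr_ae
    filter_upwards [hne] with x hxB hx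
    rw [Set.uIoc_of_le (by linarith)] at hx
    rw [h x ⟨by linarith [hx.1], lt_of_le_of_ne hx.2 hxB⟩]

lemma clamp_holder {A B : ℝ} (hAB : A ≤ B) {f : ℝ → ℝ} {C γ : ℝ} (hC : 0 ≤ C) (hγ : 0 < γ)
    (hf : ∀ r ∈ Set.Icc A B, ∀ r' ∈ Set.Icc A B, |f r - f r'| ≤ C * |r - r'| ^ γ) (x y : ℝ) :
    |f (max A (min B x)) - f (max A (min B y))| ≤ C * |x - y| ^ γ := by
  have hm : ∀ x : ℝ, max A (min B x) ∈ Set.Icc A B := fun x => ⟨le_max_left _ _, max_le hAB (min_le_left _ _)⟩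
  refine (hf _ (hm x) _ (hm y)).trans ?_
  have h1 : |max A (min B x) - max A (min B y)| ≤ |x - y| :=
    by
      have e1 := abs_max_sub_max_le_max A (min B x) A (min B y)
      have e2 := abs_min_sub_min_le_max B x B y
      refine e1.trans (max_le (by simp) (e2.trans (max_le (by simp) le_rfl)))
  gcongr

end Helpers

/-- Inversion of the dominant singular integral operator `L_α[ψ] = ψ + tan(πα) H[ψ]`:
the explicit `ψ = cos²(πα)φ − sin(πα) e^{−πH[α]} H[cos(πα) e^{πH[α]} φ]` satisfies
`L_α[ψ] = φ` on `(A,B)`. -/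
theorem inversion_formula_variable_coefficient (A B : ℝ) (hAB : A < B) (α φ : ℝ → ℝ)
    (γα : ℝ) (hγα : γα ∈ Set.Ioc (0 : ℝ) 1) (Cα : ℝ) (hCα : 0 ≤ Cα)
    (hαHolder : ∀ r ∈ Set.Icc A B, ∀ r' ∈ Set.Icc A B, |α r - α r'| ≤ Cα * |r - r'| ^ γα)
    (hαrange : ∀ r ∈ Set.Icc A B, α r ∈ Set.Ioo (-(1/2) : ℝ) (1/2))
    (γφ : ℝ) (hγφ : γφ ∈ Set.Ioc (0 : ℝ) 1) (Cφ : ℝ) (hCφ : 0 ≤ Cφ)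
    (hφHolder : ∀ r ∈ Set.Icc A B, ∀ r' ∈ Set.Icc A B, |φ r - φ r'| ≤ Cφ * |r - r'| ^ γφ)
    (w : ℝ → ℝ)
    (hw : ∀ r : ℝ, w r = Real.cos (Real.pi * α r) * Real.exp (Real.pi * Hfin A B α r) * φ r)
    (γw : ℝ) (hγw : γw ∈ Set.Ioc (0 : ℝ) 1) (Cw : ℝ) (hCw : 0 ≤ Cw)
    (hwHolder : ∀ r ∈ Set.Icc A B, ∀ r' ∈ Set.Icc A B, |w r - w r'| ≤ Cw * |r - r'| ^ γw)
    (ψ : ℝ → ℝ)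
    (hψ : ∀ s : ℝ, ψ s = Real.cos (Real.pi * α s) ^ 2 * φ s -
        Real.sin (Real.pi * α s) * Real.exp (-(Real.pi * Hfin A B α s)) * Hfin A B w s) :
    ∀ s ∈ Set.Ioo A B,
      (∃ L : ℝ, Tendsto (pvApprox A B ψ s) (𝓝[>] 0) (𝓝 L)) ∧
      ψ s + Real.tan (Real.pi * α s) * Hfin A B ψ s = φ s := by
  intro s hs
  have hAB' : A ≤ B := hAB.le
  have hpi := Real.pi_pos
  set f : ℝ → ℝ := fun x => α (max A (min B x)) with hfdef
  set g : ℝ → ℝ := fun x => w (max A (min B x)) with hgdef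
  have hm : ∀ x : ℝ, max A (min B x) ∈ Set.Icc A B := fun x => ⟨le_max_left _ _, max_le hAB' (min_le_left _ _)⟩
  have hclamp : ∀ x ∈ Set.Ioo A B, max A (min B x) = x := fun x hx => by
    rw [min_eq_right hx.2.le, max_eq_right hx.1.le]
  have hfα : ∀ x ∈ Set.Ioo A B, f x = α x := fun x hx => by rw [hfdef]; simp only; rw [hclamp x hx]
  have hgw : ∀ x ∈ Set.Ioo A B, g x = w x := fun x hx => by rw [hgdef]; simp only; rw [hclamp x hx]
  have hfH : ∀ x y, |f x - f y| ≤ Cα * |x - y| ^ γα := clamp_holder hAB' hCα hγα.1 hαHolder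
  have hgH : ∀ x y, |g x - g y| ≤ Cw * |x - y| ^ γw := clamp_holder hAB' hCw hγw.1 hwHolder
  have hfb : ∀ x, |f x| ≤ 1 / 2 := fun x => by
    have := hαrange _ (hm x)
    exact abs_le.2 ⟨this.1.le, this.2.le⟩
  have hgb : ∀ x, |g x| ≤ |w A| + Cw * (B - A) ^ γw := fun x => by
    have h1 := hwHolder _ (hm x) A ⟨le_rfl, hAB'⟩
    have h2 : |max A (min B x) - A| ≤ B - A := by
      rw [abs_of_nonneg (by linarith [(hm x).1])]
      linarith [(hm x).2]
    have h3 : |max A (min B x) - A| ^ γw ≤ (B - A) ^ γw :=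
      Real.rpow_le_rpow (abs_nonneg _) h2 hγw.1.le
    have h4 := mul_le_mul_of_nonneg_left h3 hCw
    have h5 : |g x| ≤ |w A| + |g x - w A| := by
      have := abs_add_le (w A) (g x - w A)
      simpa using this
    have h6 : |g x - w A| ≤ Cw * |max A (min B x) - A| ^ γw := h1
    linarith
  have hα1 : ∀ x ∈ Set.Ioo A B, Real.pi * Hfin A B α x = (cauExt A B f x).re := by
    intro x hx
    have h1 := (cauExt_pv hx.1 hx.2 hCα hγα.1 hfH).congr' (pvApprox_congr hx.1 hx.2 hfα)
    rw [Hfin, pv, h1.limUnder_eq]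
    field_simp
  have hw1 : ∀ x ∈ Set.Ioo A B, Real.pi * Hfin A B w x = (cauExt A B g x).re := by
    intro x hx
    have h1 := (cauExt_pv hx.1 hx.2 hCw hγw.1 hgH).congr' (pvApprox_congr hx.1 hx.2 hgw)
    rw [Hfin, pv, h1.limUnder_eq]
    field_simp
  have hexp : ∀ x ∈ Set.Ioo A B, Complex.exp (-cauExt A B f x) * cauExt A B g x =
      ⟨Real.exp (-(Real.pi * Hfin A B α x)) * (Real.cos (Real.pi * α x) * (Real.pi * Hfin A B w x)
          + Real.sin (Real.pi * α x) * (Real.pi * w x)),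
        Real.exp (-(Real.pi * Hfin A B α x)) * (Real.cos (Real.pi * α x) * (Real.pi * w x)
          - Real.sin (Real.pi * α x) * (Real.pi * Hfin A B w x))⟩ := by
    intro x hx
    have i1 := cauExt_inside_im hx.1 hx.2 f
    have i2 := cauExt_inside_im hx.1 hx.2 g
    rw [hfα x hx] at i1
    rw [hgw x hx] at i2
    apply Complex.ext
    · rw [Complex.mul_re, Complex.exp_re, Complex.exp_im, Complex.neg_re, Complex.neg_im, i1, i2,
        ← hα1 x hx, ← hw1 x hx, Real.cos_neg, Real.sin_neg]
      simp only
      ring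
    · rw [Complex.mul_im, Complex.exp_re, Complex.exp_im, Complex.neg_re, Complex.neg_im, i1, i2,
        ← hα1 x hx, ← hw1 x hx, Real.cos_neg, Real.sin_neg]
      simp only
      ring
  have hee : ∀ x, Real.exp (-(Real.pi * Hfin A B α x)) * Real.exp (Real.pi * Hfin A B α x) = 1 := fun x => by
    rw [← Real.exp_add]; simp
  have hψV : ∀ x ∈ Set.Ioo A B, (Complex.exp (-cauExt A B f x) * cauExt A B g x).im = Real.pi * ψ x := by
    intro x hx
    rw [hexp x hx, hψ x]
    simp only
    rw [hw x]
    linear_combination (Real.cos (Real.pi * α x) ^ 2 * Real.pi * φ x) * hee x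
  have hkey := key_identity hs.1 hs.2 hCα hγα.1 hγα.2 hfH hCw hγw.1 hγw.2 hgH hfb hgb
  have hkey2 := hkey.congr' (pvApprox_congr hs.1 hs.2 hψV)
  have hscale : pvApprox A B (fun x => Real.pi * ψ x) s = fun ε => Real.pi * pvApprox A B ψ s ε := by
    funext ε
    unfold pvApprox
    simp_rw [mul_div_assoc]
    rw [intervalIntegral.integral_const_mul, intervalIntegral.integral_const_mul]
    ring
  rw [hscale] at hkey2
  have hkey3 : Tendsto (pvApprox A B ψ s) (𝓝[>] 0) (𝓝 (Complex.exp (-cauExt A B f s) * cauExt A B g s).re) := by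
    have := hkey2.const_mul (Real.pi)⁻¹
    simpa only [inv_mul_cancel_left₀ hpi.ne'] using this
  refine ⟨⟨_, hkey3⟩, ?_⟩
  have hcos : Real.cos (Real.pi * α s) ≠ 0 := by
    have := hαrange s ⟨hs.1.le, hs.2.le⟩
    apply (Real.cos_pos_of_mem_Ioo ⟨?_, ?_⟩).ne'
    · nlinarith [this.1]
    · nlinarith [this.2]
  have hHψ : Hfin A B ψ s = Real.exp (-(Real.pi * Hfin A B α s)) * (Real.cos (Real.pi * α s) * Hfin A B w s
          + Real.sin (Real.pi * α s) * w s) := by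
    rw [Hfin, pv, hkey3.limUnder_eq, hexp s hs]
    simp only
    field_simp
  have hHψ2 : Hfin A B ψ s = Real.cos (Real.pi * α s) * (Real.exp (-(Real.pi * Hfin A B α s)) * Hfin A B w s
      + Real.sin (Real.pi * α s) * φ s) := by
    rw [hHψ, hw s]
    linear_combination (Real.sin (Real.pi * α s) * Real.cos (Real.pi * α s) * φ s) * hee s
  have htan : Real.tan (Real.pi * α s) * Real.cos (Real.pi * α s) = Real.sin (Real.pi * α s) := Real.tan_mul_cos hcos
  rw [hHψ2, ← mul_assoc, htan, hψ s]
  linear_combination φ s * Real.sin_sq_add_cos_sq (Real.pi * α s)
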